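/- arXiv:2506.09044 — 2 statements merged into one kernel-verified Lean document; each statement's English description precedes it below -/
import Mathlib

section
/- Let Θ and Z be real normed vector spaces (Z carrying a measurable-space structure), let Z₀ be a measurable space, and let D₀ be a probability measure on Z₀. Let ℓ : Z × Θ → ℝ be jointly convex, let φ : Z₀ × Θ → Z be affine in its second argument for each fixed z₀, and assume that for every (θ_M, θ_D) the function z₀ ↦ ℓ(φ(z₀, θ_D), θ_M) is D₀-integrable. Define DR(θ_M, θ_D) = ∫ ℓ(φ(z₀, θ_D), θ_M) dD₀(z₀). Then every local minimum of DR on Θ × Θ is a global minimum: if (θ_M⁰, θ_D⁰) is a local minimizer of DR (with respect to the product norm topology), then DR(θ_M⁰, θ_D⁰) ≤ DR(θ_M, θ_D) for all (θ_M, θ_D) ∈ Θ × Θ. -/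
open MeasureTheory

/-- Under joint convexity of the loss and affinity of the push-forward map in
the parameter, every local minimum of the decoupled performative risk
`DR (θM, θD) = ∫ ℓ (φ z₀ θD) θM ∂D₀` (with respect to the product norm
topology on `Θ × Θ`) is a global minimum. -/
theorem decoupled_risk_local_min_is_global
    {Θ Z Z₀ : Type*} [NormedAddCommGroup Θ] [NormedSpace ℝ Θ]
    [NormedAddCommGroup Z] [NormedSpace ℝ Z] [MeasurableSpace Z]
    [MeasurableSpace Z₀]
    (D₀ : Measure Z₀) [IsProbabilityMeasure D₀]
    (ℓ : Z → Θ → ℝ) (φ : Z₀ → Θ → Z)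
    (hℓ : ∀ (z z' : Z) (θ θ' : Θ) (t : ℝ), 0 ≤ t → t ≤ 1 →
      ℓ (t • z + (1 - t) • z') (t • θ + (1 - t) • θ')
        ≤ t * ℓ z θ + (1 - t) * ℓ z' θ')
    (hφ : ∀ (z₀ : Z₀) (θ θ' : Θ) (t : ℝ), 0 ≤ t → t ≤ 1 →
      φ z₀ (t • θ + (1 - t) • θ') = t • φ z₀ θ + (1 - t) • φ z₀ θ')
    (hint : ∀ (θM θD : Θ), Integrable (fun z₀ => ℓ (φ z₀ θD) θM) D₀)
    (θM₀ θD₀ : Θ)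
    (hloc : IsLocalMin (fun p : Θ × Θ => ∫ z₀, ℓ (φ z₀ p.2) p.1 ∂D₀) (θM₀, θD₀)) :
    ∀ (θM θD : Θ),
      (∫ z₀, ℓ (φ z₀ θD₀) θM₀ ∂D₀) ≤ ∫ z₀, ℓ (φ z₀ θD) θM ∂D₀ := by
  intro θM θD
  refine IsMinOn.of_isLocalMin_of_convex_univ hloc ⟨convex_univ, ?_⟩ (θM, θD)
  rintro ⟨m, d⟩ - ⟨m', d'⟩ - a b ha hb hab
  obtain rfl : b = 1 - a := by linarith
  have ha1 : a ≤ 1 := by linarith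
  simp only [Prod.smul_mk, Prod.mk_add_mk, smul_eq_mul]
  rw [← integral_const_mul, ← integral_const_mul,
    ← integral_add ((hint m d).const_mul a) ((hint m' d').const_mul (1 - a))]
  refine integral_mono (hint _ _)
    (((hint m d).const_mul a).add ((hint m' d').const_mul (1 - a))) ?_
  intro z₀
  show ℓ (φ z₀ (a • d + (1 - a) • d')) (a • m + (1 - a) • m')
    ≤ a * ℓ (φ z₀ d) m + (1 - a) * ℓ (φ z₀ d') m'
  rw [hφ z₀ d d' a ha ha1]
  exact hℓ _ _ _ _ a ha ha1
end

section
/- Let Θ and Z be finite-dimensional real inner product spaces, Z₀ a measurable space, D₀ a probability measure on Z₀, and γ > 0. Let ℓ : Z × Θ → ℝ be Fréchet differentiable with gradients ∇_zℓ and ∇_θℓ, and γ-strongly jointly convex: for all (z, θ), (z', θ'), ℓ(z', θ') − ℓ(z, θ) ≥ ⟨∇_zℓ(z, θ), z' − z⟩ + ⟨∇_θℓ(z, θ), θ' − θ⟩ + (γ/2)(‖z' − z‖² + ‖θ' − θ‖²). Let φ(z₀, θ) = ψ(z₀) + g(z₀)(θ) with ψ : Z₀ → Z and g(z₀) : Θ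 → Z a continuous linear map for each z₀, satisfying ‖g(z₀)(v)‖ = ‖g(z₀)‖·‖v‖ for all v ∈ Θ (where ‖g(z₀)‖ is the operator norm). Assume z₀ ↦ ‖g(z₀)‖² is D₀-integrable, and that for all (θ_M, θ_D) the functions z₀ ↦ ℓ(φ(z₀, θ_D), θ_M), z₀ ↦ ∇_θℓ(φ(z₀, θ_D), θ_M), and z₀ ↦ g(z₀)*(∇_zℓ(φ(z₀, θ_D), θ_M)) (where g(z₀)* is the adjoint) are D₀-integrable. Set λ = min(1, ∫ ‖g(z₀)‖² dD₀(z₀)), DR(θ_M, θ_D) = ∫ ℓ(φ(z₀, θ_D), θ_M) dD₀(z₀), G_M(θ_M, θ_D) = ∫ ∇_θℓ(φ(z₀, θ_D), θ_M) dD₀(z₀), and G_D(θ_M, θ_D) = ∫ g(z₀)*(∇_zℓ(φ(z₀, θ_D), θ_M)) dD₀(z₀). Then for all (θ_M, θ_D), (θ_M', θ_D'): DR(θ_M', θ_D') − DR(θ_M, θ_D) ≥ ⟨G_M(θ_M, θ_D), θ_M' − θ_M⟩ + ⟨G_D(θ_M, θ_D), θ_D' − θ_D⟩ + (λγ/2)(‖θ_M'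 − θ_M‖² + ‖θ_D' − θ_D‖²), i.e. DR is (λγ)-strongly jointly convex. -/
open MeasureTheory
open scoped RealInnerProductSpace

/-- If the loss `ℓ` is `γ`-strongly jointly convex with (partial) gradients
`gz`, `gθ`, and the push-forward map is `φ z₀ θ = ψ z₀ + g z₀ θ` with
`g z₀` a continuous linear map satisfying `‖g z₀ v‖ = ‖g z₀‖ * ‖v‖`, then the
decoupled performative risk `DR (θM, θD) = ∫ ℓ (φ z₀ θD) θM ∂D₀` is
`(λ * γ)`-strongly jointly convex with
`λ = min 1 (∫ ‖g z₀‖² ∂D₀)`, where the partial gradients of `DR` are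
`G_M (θM, θD) = ∫ gθ (φ z₀ θD) θM ∂D₀` and
`G_D (θM, θD) = ∫ (g z₀)† (gz (φ z₀ θD) θM) ∂D₀`. -/
theorem decoupled_risk_strongly_jointly_convex
    {Θ Z Z₀ : Type*}
    [NormedAddCommGroup Θ] [InnerProductSpace ℝ Θ] [FiniteDimensional ℝ Θ]
    [NormedAddCommGroup Z] [InnerProductSpace ℝ Z] [FiniteDimensional ℝ Z]
    [MeasurableSpace Z₀]
    (D₀ : Measure Z₀) [IsProbabilityMeasure D₀]
    (γ : ℝ) (hγ : 0 < γ)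
    (ℓ : Z → Θ → ℝ) (gz : Z → Θ → Z) (gθ : Z → Θ → Θ)
    (hgrad : ∀ (z : Z) (θ : Θ),
      HasGradientAt (fun z' : Z => ℓ z' θ) (gz z θ) z ∧
      HasGradientAt (fun θ' : Θ => ℓ z θ') (gθ z θ) θ)
    (hsc : ∀ (z z' : Z) (θ θ' : Θ),
      ℓ z' θ' - ℓ z θ ≥
        ⟪gz z θ, z' - z⟫ + ⟪gθ z θ, θ' - θ⟫
          + γ / 2 * (‖z' - z‖ ^ 2 + ‖θ' - θ‖ ^ 2))
    (ψ : Z₀ → Z) (g : Z₀ → Θ →L[ℝ] Z)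
    (φ : Z₀ → Θ → Z) (hφ : ∀ (z₀ : Z₀) (θ : Θ), φ z₀ θ = ψ z₀ + g z₀ θ)
    (hgnorm : ∀ (z₀ : Z₀) (v : Θ), ‖g z₀ v‖ = ‖g z₀‖ * ‖v‖)
    (hg2int : Integrable (fun z₀ => ‖g z₀‖ ^ 2) D₀)
    (hint : ∀ (θM θD : Θ), Integrable (fun z₀ => ℓ (φ z₀ θD) θM) D₀)
    (hintθ : ∀ (θM θD : Θ), Integrable (fun z₀ => gθ (φ z₀ θD) θM) D₀)
    (hintz : ∀ (θM θD : Θ),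
      Integrable
        (fun z₀ => ContinuousLinearMap.adjoint (g z₀) (gz (φ z₀ θD) θM)) D₀)
    (lam : ℝ) (hlam : lam = min 1 (∫ z₀, ‖g z₀‖ ^ 2 ∂D₀))
    (DR : Θ → Θ → ℝ)
    (hDR : ∀ (θM θD : Θ), DR θM θD = ∫ z₀, ℓ (φ z₀ θD) θM ∂D₀)
    (GM GD : Θ → Θ → Θ)
    (hGM : ∀ (θM θD : Θ), GM θM θD = ∫ z₀, gθ (φ z₀ θD) θM ∂D₀)
    (hGD : ∀ (θM θD : Θ), GD θM θD =
      ∫ z₀, ContinuousLinearMap.adjoint (g z₀) (gz (φ z₀ θD) θM) ∂D₀) :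
    ∀ (θM θD θM' θD' : Θ),
      DR θM' θD' - DR θM θD ≥
        ⟪GM θM θD, θM' - θM⟫ + ⟪GD θM θD, θD' - θD⟫
          + lam * γ / 2 * (‖θM' - θM‖ ^ 2 + ‖θD' - θD‖ ^ 2) := by
  intro θM θD θM' θD'
  have hA := (hintθ θM θD).inner_const (𝕜 := ℝ) (θM' - θM)
  have hB := (hintz θM θD).inner_const (𝕜 := ℝ) (θD' - θD)
  have eA : ⟪GM θM θD, θM' - θM⟫ = ∫ z₀, ⟪gθ (φ z₀ θD) θM, θM' - θM⟫ ∂D₀ := by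
    rw [hGM, real_inner_comm, ← integral_inner (hintθ θM θD)]
    simp only [real_inner_comm]
  have eB : ⟪GD θM θD, θD' - θD⟫ =
      ∫ z₀, ⟪ContinuousLinearMap.adjoint (g z₀) (gz (φ z₀ θD) θM), θD' - θD⟫ ∂D₀ := by
    rw [hGD, real_inner_comm, ← integral_inner (hintz θM θD)]
    simp only [real_inner_comm]
  have hC : Integrable (fun z₀ => ‖g z₀‖ ^ 2 * (γ / 2 * ‖θD' - θD‖ ^ 2)) D₀ :=
    hg2int.mul_const _
  have hK : Integrable (fun _ : Z₀ => γ / 2 * ‖θM' - θM‖ ^ 2) D₀ := integrable_const _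
  have key : ∫ z₀, (⟪gθ (φ z₀ θD) θM, θM' - θM⟫
        + ⟪ContinuousLinearMap.adjoint (g z₀) (gz (φ z₀ θD) θM), θD' - θD⟫
        + ‖g z₀‖ ^ 2 * (γ / 2 * ‖θD' - θD‖ ^ 2) + γ / 2 * ‖θM' - θM‖ ^ 2) ∂D₀
      ≤ ∫ z₀, (ℓ (φ z₀ θD') θM' - ℓ (φ z₀ θD) θM) ∂D₀ := by
    refine integral_mono (((hA.add hB).add hC).add hK)
      ((hint θM' θD').sub (hint θM θD)) ?_
    intro z₀
    have h := hsc (φ z₀ θD) (φ z₀ θD') θM θM'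
    have hd : φ z₀ θD' - φ z₀ θD = g z₀ (θD' - θD) := by
      rw [hφ, hφ, map_sub]; abel
    rw [hd, hgnorm, mul_pow] at h
    simp only [ContinuousLinearMap.adjoint_inner_left]
    linarith
  rw [integral_sub (hint θM' θD') (hint θM θD), integral_add (by exact (hA.add hB).add hC) hK,
    integral_add (by exact hA.add hB) hC, integral_add hA hB, ← eA, ← eB, integral_mul_const,
    ← hDR, ← hDR] at key
  simp only [integral_const, probReal_univ, one_smul] at key
  have h1 : lam ≤ 1 := hlam ▸ min_le_left _ _
  have h2 : lam ≤ ∫ z₀, ‖g z₀‖ ^ 2 ∂D₀ := hlam ▸ min_le_right _ _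
  have p1 := mul_le_mul_of_nonneg_right h1
    (show 0 ≤ γ / 2 * ‖θM' - θM‖ ^ 2 by positivity)
  have p2 := mul_le_mul_of_nonneg_right h2
    (show 0 ≤ γ / 2 * ‖θD' - θD‖ ^ 2 by positivity)
  linarith
end
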